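/- Classification of the stationary axisymmetric kernel (s = −2): If Φ : U → ℂ is smooth and satisfies ∂_r⁴ Φ = 0 and 𝒯₋₂ Φ = 0 everywhere on U = {(r,z) : r > r₊, −1 < z < 1}, then there exists a unique c = (c₁,…,c₈) ∈ ℂ⁸ such that Φ = Φ_Ker(c) on U. In particular, the space of smooth joint solutions of these two equations is exactly the 8-dimensional complex linear span of the eight functions appearing in Φ_Ker. -/

import Mathlib

noncomputable section

open ComplexConjugate Filter

namespace Kerr

/-- A point of the Boyer-Lindquist-type coordinate chart `(t, r, z, φ)`. -/
abbrev Pt := Fin 4 → ℝ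

/-- Partial derivative of a real-valued function on the chart. -/
def pd (i : Fin 4) (f : Pt → ℝ) (p : Pt) : ℝ :=
  fderiv ℝ f p (Pi.single i 1)

/-- Partial derivative of a complex-valued function on the chart. -/
def pdC (i : Fin 4) (f : Pt → ℂ) (p : Pt) : ℂ :=
  fderiv ℝ f p (Pi.single i 1)

/-- `Δ := r(r−2M)+a²` for the Kerr black hole with `M = 1`. -/
def Del (a r : ℝ) : ℝ := r * (r - 2) + a ^ 2

/-- `Σ := r² + a²z²`. -/
def Sig (a r z : ℝ) : ℝ := r ^ 2 + a ^ 2 * z ^ 2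

/-- Outer horizon radius `r₊ = 1 + √(1−a²)` (with `M = 1`). -/
def rplus (a : ℝ) : ℝ := 1 + Real.sqrt (1 - a ^ 2)

/-- Inner horizon radius `r₋ = 1 − √(1−a²)` (with `M = 1`). -/
def rminus (a : ℝ) : ℝ := 1 - Real.sqrt (1 - a ^ 2)

/-- The Kerr family of metrics, parametrized by mass `M` and angular momentum `J` (`a = J/M`),
in Boyer-Lindquist-type coordinates `(t,r,z,φ)`. -/
def gFam (M J : ℝ) (p : Pt) : Matrix (Fin 4) (Fin 4) ℝ :=
  Matrix.of
    ![![-(1 - 2 * M * p 1 / (p 1 ^ 2 + (J / M) ^ 2 * p 2 ^ 2)), 0, 0,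
        -(2 * M * (J / M) * p 1 * (1 - p 2 ^ 2) / (p 1 ^ 2 + (J / M) ^ 2 * p 2 ^ 2))],
      ![0, (p 1 ^ 2 + (J / M) ^ 2 * p 2 ^ 2) / (p 1 ^ 2 - 2 * M * p 1 + (J / M) ^ 2), 0, 0],
      ![0, 0, (p 1 ^ 2 + (J / M) ^ 2 * p 2 ^ 2) / (1 - p 2 ^ 2), 0],
      ![-(2 * M * (J / M) * p 1 * (1 - p 2 ^ 2) / (p 1 ^ 2 + (J / M) ^ 2 * p 2 ^ 2)), 0, 0,
        (1 - p 2 ^ 2) / (p 1 ^ 2 + (J / M) ^ 2 * p 2 ^ 2) *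
          (2 * (J / M) ^ 2 * M * p 1 * (1 - p 2 ^ 2)
            + ((J / M) ^ 2 + p 1 ^ 2) * (p 1 ^ 2 + (J / M) ^ 2 * p 2 ^ 2))]]

/-- The background Kerr metric with `M = 1` and spin `a`. -/
def g (a : ℝ) : Pt → Matrix (Fin 4) (Fin 4) ℝ := gFam 1 a

/-- Inverse Kerr metric. -/
def gInv (a : ℝ) (p : Pt) : Matrix (Fin 4) (Fin 4) ℝ := (g a p)⁻¹

/-- Christoffel symbols `Γ^l_{m n}` of the Kerr metric. -/
def Chr (a : ℝ) (l m n : Fin 4) (p : Pt) : ℝ :=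
  (1 / 2) * ∑ s : Fin 4, gInv a p l s *
    (pd m (fun q => g a q s n) p + pd n (fun q => g a q s m) p - pd s (fun q => g a q m n) p)

/-- Covariant derivative `(∇_c h)_{α β}` of a covariant 2-tensor field. -/
def covD2 (a : ℝ) (h : Pt → Matrix (Fin 4) (Fin 4) ℝ) (c α β : Fin 4) (p : Pt) : ℝ :=
  pd c (fun q => h q α β) p
    - ∑ s : Fin 4, Chr a s c α p * h p s β
    - ∑ s : Fin 4, Chr a s c β p * h p α s

/-- Covariant derivative `(∇_c T)_{α β γ}` of a covariant 3-tensor field. -/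
def covD3 (a : ℝ) (T : Fin 4 → Fin 4 → Fin 4 → Pt → ℝ) (c α β γ : Fin 4) (p : Pt) : ℝ :=
  pd c (fun q => T α β γ q) p
    - ∑ s : Fin 4, Chr a s c α p * T s β γ p
    - ∑ s : Fin 4, Chr a s c β p * T α s γ p
    - ∑ s : Fin 4, Chr a s c γ p * T α β s p

/-- The Killing vector `k = x ∂_t + y ∂_φ` of the Kerr background. -/
def kvec (x y : ℝ) : Fin 4 → ℝ := ![x, 0, 0, y]

/-- The lowered Killing covector `k_α`. -/
def kco (a x y : ℝ) (p : Pt) (α : Fin 4) : ℝ := ∑ s : Fin 4, g a p α s * kvec x y s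

/-- `∇_β k^λ` for the Killing vector `k = x ∂_t + y ∂_φ`. -/
def covDk (a x y : ℝ) (β l : Fin 4) (p : Pt) : ℝ :=
  pd β (fun _ => kvec x y l) p + ∑ s : Fin 4, Chr a l β s p * kvec x y s

/-- Trace-reversed metric perturbation `h̄_{αβ} = h_{αβ} − ½ g_{αβ} g^{λσ} h_{λσ}`. -/
def trRev (a : ℝ) (h : Pt → Matrix (Fin 4) (Fin 4) ℝ) (p : Pt) : Matrix (Fin 4) (Fin 4) ℝ :=
  Matrix.of fun α β =>
    h p α β - (1 / 2) * g a p α β * ∑ l : Fin 4, ∑ s : Fin 4, gInv a p l s * h p l s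

/-- Abbott–Deser 2-form `F_{αβ}[h, k]` (lowered indices) for the Killing vector
`k = x ∂_t + y ∂_φ`. -/
def ADform (a : ℝ) (h : Pt → Matrix (Fin 4) (Fin 4) ℝ) (x y : ℝ) (α β : Fin 4) (p : Pt) : ℝ :=
  (1 / (8 * Real.pi)) *
    ((1 / 2) * (∑ l : Fin 4, kvec x y l *
        (covD2 a (trRev a h) α β l p - covD2 a (trRev a h) β α l p))
    + (1 / 2) * (∑ l : Fin 4,
        (trRev a h p l α * covDk a x y β l p - trRev a h p l β * covDk a x y α l p))
    - (1 / 2) *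
        (kco a x y p α * ∑ l : Fin 4, ∑ s : Fin 4, gInv a p l s * covD2 a (trRev a h) s β l p
        - kco a x y p β * ∑ l : Fin 4, ∑ s : Fin 4, gInv a p l s * covD2 a (trRev a h) s α l p))

/-- Abbott–Deser 2-form with raised indices, `F^{αβ}[h,k]`. -/
def ADformUp (a : ℝ) (h : Pt → Matrix (Fin 4) (Fin 4) ℝ) (x y : ℝ) (α β : Fin 4) (p : Pt) : ℝ :=
  ∑ m : Fin 4, ∑ n : Fin 4, gInv a p α m * gInv a p β n * ADform a h x y m n p

/-- The Abbott–Deser charge density `ℱ[k] := Σ F^{rt}[h,k]`. -/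
def Fdens (a : ℝ) (h : Pt → Matrix (Fin 4) (Fin 4) ℝ) (x y : ℝ) (p : Pt) : ℝ :=
  Sig a (p 1) (p 2) * ADformUp a h x y 1 0 p

/-- The Abbott–Deser charge `Q[h, x∂_t + y∂_φ, S_{t,r}] = ∫₀^{2π}∫_{−1}^1 Σ F^{rt} dz dφ`. -/
def ADcharge (a : ℝ) (h : Pt → Matrix (Fin 4) (Fin 4) ℝ) (x y t r : ℝ) : ℝ :=
  ∫ φ in (0:ℝ)..(2 * Real.pi), ∫ z in (-1:ℝ)..(1:ℝ),
    Sig a r z * ADformUp a h x y 1 0 ![t, r, z, φ]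

/-! ### The Kinnersley tetrad and Newman-Penrose quantities -/

/-- The Newman–Penrose coefficient `ρ = −1/(r − i a z)`. -/
def rhoC (a : ℝ) (p : Pt) : ℂ := -1 / ((p 1 : ℂ) - Complex.I * (a : ℂ) * (p 2 : ℂ))

/-- Kinnersley tetrad leg `l^μ`. -/
def lvec (a : ℝ) (p : Pt) : Fin 4 → ℂ := fun i =>
  ((![(p 1 ^ 2 + a ^ 2) / Del a (p 1), 1, 0, a / Del a (p 1)] : Fin 4 → ℝ) i : ℂ)

/-- Kinnersley tetrad leg `n^μ`. -/
def nvec (a : ℝ) (p : Pt) : Fin 4 → ℂ := fun i =>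
  ((![(p 1 ^ 2 + a ^ 2) / (2 * Sig a (p 1) (p 2)), -Del a (p 1) / (2 * Sig a (p 1) (p 2)), 0,
      a / (2 * Sig a (p 1) (p 2))] : Fin 4 → ℝ) i : ℂ)

/-- Kinnersley tetrad leg `m^μ`. -/
def mvec (a : ℝ) (p : Pt) : Fin 4 → ℂ := fun i =>
  (-(conj (rhoC a p)) * (Real.sqrt (1 - p 2 ^ 2) : ℂ) / (Real.sqrt 2 : ℂ)) *
    (![Complex.I * (a : ℂ), 0, -1, Complex.I / (1 - (p 2 : ℂ) ^ 2)] i)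

/-- Kinnersley tetrad leg `m̄^μ`. -/
def mbvec (a : ℝ) (p : Pt) : Fin 4 → ℂ := fun i => conj (mvec a p i)

/-- Lowered tetrad covector `l_μ`. -/
def lco (a : ℝ) (p : Pt) (i : Fin 4) : ℂ := ∑ j : Fin 4, (g a p i j : ℂ) * lvec a p j

/-- Lowered tetrad covector `n_μ`. -/
def nco (a : ℝ) (p : Pt) (i : Fin 4) : ℂ := ∑ j : Fin 4, (g a p i j : ℂ) * nvec a p j

/-- Lowered tetrad covector `m_μ`. -/
def mco (a : ℝ) (p : Pt) (i : Fin 4) : ℂ := ∑ j : Fin 4, (g a p i j : ℂ) * mvec a p j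

/-- Lowered tetrad covector `m̄_μ`. -/
def mbco (a : ℝ) (p : Pt) (i : Fin 4) : ℂ := ∑ j : Fin 4, (g a p i j : ℂ) * mbvec a p j

/-- Newman–Penrose spin coefficient `μ = ρ²ρ̄Δ/2`. -/
def muNP (a : ℝ) (p : Pt) : ℂ := rhoC a p ^ 2 * conj (rhoC a p) * (Del a (p 1) : ℂ) / 2

/-- Newman–Penrose spin coefficient `τ = −iaρρ̄√(1−z²)/√2`. -/
def tauNP (a : ℝ) (p : Pt) : ℂ :=
  -Complex.I * (a : ℂ) * rhoC a p * conj (rhoC a p) * (Real.sqrt (1 - p 2 ^ 2) : ℂ)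
    / (Real.sqrt 2 : ℂ)

/-- Newman–Penrose spin coefficient `π = iaρ²√(1−z²)/√2`. -/
def piNP (a : ℝ) (p : Pt) : ℂ :=
  Complex.I * (a : ℂ) * rhoC a p ^ 2 * (Real.sqrt (1 - p 2 ^ 2) : ℂ) / (Real.sqrt 2 : ℂ)

/-- Newman–Penrose spin coefficient `γ = μ + ρρ̄(r−1)/2`. -/
def gamNP (a : ℝ) (p : Pt) : ℂ :=
  muNP a p + rhoC a p * conj (rhoC a p) * ((p 1 : ℂ) - 1) / 2

/-- Newman–Penrose spin coefficient `β = −ρ̄z/(2√2√(1−z²))`. -/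
def betNP (a : ℝ) (p : Pt) : ℂ :=
  -(conj (rhoC a p)) * (p 2 : ℂ) / (2 * (Real.sqrt 2 : ℂ) * (Real.sqrt (1 - p 2 ^ 2) : ℂ))

/-- Newman–Penrose spin coefficient `α = π − β̄`. -/
def alpNP (a : ℝ) (p : Pt) : ℂ := piNP a p - conj (betNP a p)

/-- Directional derivative along a (complex) vector field. -/
def dirD (v : Pt → Fin 4 → ℂ) (f : Pt → ℂ) (p : Pt) : ℂ := ∑ i : Fin 4, v p i * pdC i f p

/-- First-order operator `(v^μ ∂_μ + c)` acting on complex scalars. -/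
def opD (v : Pt → Fin 4 → ℂ) (c : Pt → ℂ) (f : Pt → ℂ) : Pt → ℂ :=
  fun p => dirD v f p + c p * f p

/-- The CCK operator `₊₂Ĥ_{μν}` applied to a Hertz potential `Φ`. -/
def Hplus (a : ℝ) (Φ : Pt → ℂ) (p : Pt) (i j : Fin 4) : ℂ :=
  -(rhoC a p) ^ (-4 : ℤ) *
    (lco a p i * lco a p j *
        opD (mbvec a) (fun q => -3 * alpNP a q - conj (betNP a q) + 5 * piNP a q)
          (opD (mbvec a) (fun q => -4 * alpNP a q + piNP a q) Φ) p
    + mco a p i * mco a p j *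
        opD (nvec a) (fun q => 5 * muNP a q - 3 * gamNP a q + conj (gamNP a q))
          (opD (nvec a) (fun q => muNP a q - 4 * gamNP a q) Φ) p
    - (1 / 2) * (lco a p i * mco a p j + lco a p j * mco a p i) *
        (opD (mbvec a)
            (fun q => -3 * alpNP a q + conj (betNP a q) + 5 * piNP a q + conj (tauNP a q))
            (opD (nvec a) (fun q => muNP a q - 4 * gamNP a q) Φ) p
        + opD (nvec a)
            (fun q => 5 * muNP a q - conj (muNP a q) - 3 * gamNP a q - conj (gamNP a q))
            (opD (mbvec a) (fun q => -4 * alpNP a q + piNP a q) Φ) p))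

/-- The CCK operator `₋₂Ĥ_{μν}` applied to a Hertz potential `Φ`. -/
def Hminus (a : ℝ) (Φ : Pt → ℂ) (p : Pt) (i j : Fin 4) : ℂ :=
  -(nco a p i * nco a p j *
        opD (mvec a) (fun q => conj (alpNP a q) + 3 * betNP a q - tauNP a q)
          (opD (mvec a) (fun q => 4 * betNP a q + 3 * tauNP a q) Φ) p
    + mbco a p i * mbco a p j *
        opD (lvec a) (fun q => -(rhoC a q))
          (opD (lvec a) (fun q => 3 * rhoC a q) Φ) p
    - (1 / 2) * (nco a p i * mbco a p j + nco a p j * mbco a p i) *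
        (opD (mvec a) (fun q => -2 * conj (alpNP a q) + 2 * betNP a q - tauNP a q)
            (opD (lvec a) (fun q => 3 * rhoC a q) Φ) p
        + opD (lvec a) (fun q => conj (rhoC a q) - rhoC a q)
            (opD (mvec a) (fun q => 4 * betNP a q + 3 * tauNP a q) Φ) p))

/-- `ₛĤ_{μν} Φ` for `s = ±2`. -/
def Hop (a : ℝ) (s : ℤ) (Φ : Pt → ℂ) (p : Pt) (i j : Fin 4) : ℂ :=
  if s = 2 then Hplus a Φ p i j else Hminus a Φ p i j

/-- The CCK metric perturbation `h^{CCK}[s,Φ]_{μν} := ₛĤ_{μν}Φ + c.c.`. -/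
def hCCK (a : ℝ) (s : ℤ) (Φ : Pt → ℂ) (p : Pt) : Matrix (Fin 4) (Fin 4) ℝ :=
  Matrix.of fun i j => (Hop a s Φ p i j + conj (Hop a s Φ p i j)).re

/-- The homogeneous spin-`s` Teukolsky operator on the Kerr exterior. -/
def Teuk (a : ℝ) (s : ℤ) (Φ : Pt → ℂ) (p : Pt) : ℂ :=
  -((((p 1 : ℂ) ^ 2 + (a : ℂ) ^ 2) ^ 2 / (Del a (p 1) : ℂ)
      - (a : ℂ) ^ 2 * (1 - (p 2 : ℂ) ^ 2)) * pdC 0 (pdC 0 Φ) p)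
  - (4 * (a : ℂ) * (p 1 : ℂ) / (Del a (p 1) : ℂ)) * pdC 0 (pdC 3 Φ) p
  - ((a : ℂ) ^ 2 / (Del a (p 1) : ℂ) - 1 / (1 - (p 2 : ℂ) ^ 2)) * pdC 3 (pdC 3 Φ) p
  + 2 * (s : ℂ) * (((p 1 : ℂ) ^ 2 - (a : ℂ) ^ 2) / (Del a (p 1) : ℂ) - (p 1 : ℂ)
      - Complex.I * (a : ℂ) * (p 2 : ℂ)) * pdC 0 Φ p
  + 2 * (s : ℂ) * ((a : ℂ) * ((p 1 : ℂ) - 1) / (Del a (p 1) : ℂ)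
      + Complex.I * (p 2 : ℂ) / (1 - (p 2 : ℂ) ^ 2)) * pdC 3 Φ p
  + (Del a (p 1) : ℂ) ^ (-s) *
      pdC 1 (fun q => (Del a (q 1) : ℂ) ^ (s + 1) * pdC 1 Φ q) p
  + pdC 2 (fun q => (1 - (q 2 : ℂ) ^ 2) * pdC 2 Φ q) p
  - (((s : ℂ) * ((s : ℂ) + 1) * (p 2 : ℂ) ^ 2 - (s : ℂ)) / (1 - (p 2 : ℂ) ^ 2)) * Φ p

/-- The exterior Kerr coordinate patch `{r > r₊, −1 < z < 1}`. -/
def ext (a : ℝ) : Set Pt := {p | rplus a < p 1 ∧ -1 < p 2 ∧ p 2 < 1}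

/-- The closed exterior patch `{r > r₊, −1 ≤ z ≤ 1}`. -/
def extCl (a : ℝ) : Set Pt := {p | rplus a < p 1 ∧ -1 ≤ p 2 ∧ p 2 ≤ 1}

/-- A Fourier mode Hertz potential `Φ(t,r,z,φ) = ψ(r,z) e^{i(mφ − ωt)}`. -/
def fourierMode (m : ℤ) (ω : ℝ) (ψ : ℝ → ℝ → ℂ) : Pt → ℂ :=
  fun p => ψ (p 1) (p 2) * Complex.exp (Complex.I * ((m : ℂ) * (p 3 : ℂ) - (ω : ℂ) * (p 0 : ℂ)))

/-- The 2D domain `U = {(r,z) : r > r₊, −1 < z < 1}`. -/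
def U2 (a : ℝ) : Set (ℝ × ℝ) := {q | rplus a < q.1 ∧ -1 < q.2 ∧ q.2 < 1}

/-- The closed 2D domain `{(r,z) : r > r₊, −1 ≤ z ≤ 1}`. -/
def U2cl (a : ℝ) : Set (ℝ × ℝ) := {q | rplus a < q.1 ∧ -1 ≤ q.2 ∧ q.2 ≤ 1}

/-- `∂_r` of a function of `(r, z)`. -/
def pdr2 (f : ℝ → ℝ → ℂ) : ℝ → ℝ → ℂ := fun r z => deriv (fun r' => f r' z) r

/-- `∂_z` of a function of `(r, z)`. -/
def pdz2 (f : ℝ → ℝ → ℂ) : ℝ → ℝ → ℂ := fun r z => deriv (fun z' => f r z') z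

/-- The stationary axisymmetric spin-`s` Teukolsky operator
`𝒯_s Φ := Δ^{−s}∂_r(Δ^{s+1}∂_rΦ) + ∂_z((1−z²)∂_zΦ) − ((s(s+1)z²−s)/(1−z²))Φ`. -/
def TeukSAS (a : ℝ) (s : ℤ) (ψ : ℝ → ℝ → ℂ) (r z : ℝ) : ℂ :=
  (Del a r : ℂ) ^ (-s) *
      deriv (fun r' => (Del a r' : ℂ) ^ (s + 1) * deriv (fun r'' => ψ r'' z) r') r
    + deriv (fun z' => ((1 - z' ^ 2 : ℝ) : ℂ) * deriv (fun z'' => ψ r z'') z') z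
    - (((s : ℂ) * ((s : ℂ) + 1) * (z : ℂ) ^ 2 - (s : ℂ)) / (1 - (z : ℂ) ^ 2)) * ψ r z


/-- The mass perturbation `h_M := ∂g^{Kerr}/∂M` at `M = 1`, `J = a`. -/
def hM (a : ℝ) (p : Pt) : Matrix (Fin 4) (Fin 4) ℝ :=
  Matrix.of fun i j => deriv (fun M => gFam M a p i j) 1

/-- The angular-momentum perturbation `h_J := ∂g^{Kerr}/∂J` at `M = 1`, `J = a`. -/
def hJ (a : ℝ) (p : Pt) : Matrix (Fin 4) (Fin 4) ℝ :=
  Matrix.of fun i j => deriv (fun J => gFam 1 J p i j) a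

/-- The eight-parameter family `Φ_Ker(c)` of stationary axisymmetric kernel elements
(`c 0, ..., c 7` correspond to `c₁, ..., c₈`). -/
def PhiKer (a : ℝ) (c : Fin 8 → ℂ) (r z : ℝ) : ℂ :=
  (1 - (z : ℂ) ^ 2)⁻¹ *
    (c 0
    + c 1 * ((r : ℂ) - 1) * (z : ℂ)
    + c 2 * (z : ℂ) * ((z : ℂ) ^ 2 - 3)
    + c 3 * ((r : ℂ) + ((r : ℂ) - 1) * (z : ℂ) ^ 2)
    + c 4 * ((r : ℂ) ^ 2 - (a : ℂ) ^ 2) * (z : ℂ)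
    + c 5 * (r : ℂ) * ((r : ℂ) * ((r : ℂ) - 3) + 3 * (a : ℂ) ^ 2)
    + c 6 * ((r : ℂ) ^ 2 + ((r : ℂ) ^ 2 - (a : ℂ) ^ 2) * (z : ℂ) ^ 2)
    + c 7 * (r : ℂ) * (z : ℂ) *
        (((r : ℂ) * ((r : ℂ) - 3) + 3 * (a : ℂ) ^ 2) * (z : ℂ) ^ 2
          - 3 * ((r : ℂ) * ((r : ℂ) + 4) - 4 * (a : ℂ) ^ 2)))

/-- `G(z) = −4(1−a²)r₊z(1−z²)/(2z² + r₊(1−z²))²`. -/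
def Gfun (a z : ℝ) : ℝ :=
  -4 * (1 - a ^ 2) * rplus a * z * (1 - z ^ 2) / (2 * z ^ 2 + rplus a * (1 - z ^ 2)) ^ 2

/-- Outward Abbott–Deser flux through the closed surface `C_ε⁺` around the segment
`r₁ ≤ r ≤ r₂` of the axis `z = 1`, in the slice `t = t₀`: two caps at `r = r₁, r₂`
and the tube at `z = 1 − ε`. -/
def axisFluxP (a : ℝ) (h : Pt → Matrix (Fin 4) (Fin 4) ℝ) (x y t r₁ r₂ ε : ℝ) : ℝ :=
  (∫ φ in (0:ℝ)..(2 * Real.pi), ∫ z in (1 - ε)..(1:ℝ),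
      Sig a r₂ z * ADformUp a h x y 1 0 ![t, r₂, z, φ])
  - (∫ φ in (0:ℝ)..(2 * Real.pi), ∫ z in (1 - ε)..(1:ℝ),
      Sig a r₁ z * ADformUp a h x y 1 0 ![t, r₁, z, φ])
  - (∫ φ in (0:ℝ)..(2 * Real.pi), ∫ r in r₁..r₂,
      Sig a r (1 - ε) * ADformUp a h x y 2 0 ![t, r, 1 - ε, φ])

/-- Outward Abbott–Deser flux through the closed surface `C_ε⁻` around the segment
`r₁ ≤ r ≤ r₂` of the axis `z = −1`. -/
def axisFluxM (a : ℝ) (h : Pt → Matrix (Fin 4) (Fin 4) ℝ) (x y t r₁ r₂ ε : ℝ) : ℝ :=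
  (∫ φ in (0:ℝ)..(2 * Real.pi), ∫ z in (-1:ℝ)..(-1 + ε),
      Sig a r₂ z * ADformUp a h x y 1 0 ![t, r₂, z, φ])
  - (∫ φ in (0:ℝ)..(2 * Real.pi), ∫ z in (-1:ℝ)..(-1 + ε),
      Sig a r₁ z * ADformUp a h x y 1 0 ![t, r₁, z, φ])
  + (∫ φ in (0:ℝ)..(2 * Real.pi), ∫ r in r₁..r₂,
      Sig a r (-1 + ε) * ADformUp a h x y 2 0 ![t, r, -1 + ε, φ])

/-- The statement that both limiting Abbott–Deser axis charges
`Q_axis^± [h, x∂_t + y∂_φ, r₁, r₂]` vanish. -/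
def axisChargesVanish (a : ℝ) (h : Pt → Matrix (Fin 4) (Fin 4) ℝ) : Prop :=
  ∀ x y t r₁ r₂ : ℝ, rplus a < r₁ → r₁ < r₂ →
    Tendsto (fun ε => axisFluxP a h x y t r₁ r₂ ε) (nhdsWithin 0 (Set.Ioi 0)) (nhds 0) ∧
    Tendsto (fun ε => axisFluxM a h x y t r₁ r₂ ε) (nhdsWithin 0 (Set.Ioi 0)) (nhds 0)

/-- Covariant Hessian `∇_α ∇_β f` of a scalar field. -/
def hess (a : ℝ) (f : Pt → ℝ) (α β : Fin 4) (p : Pt) : ℝ :=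
  pd α (fun q => pd β f q) p - ∑ s : Fin 4, Chr a s α β p * pd s f p

/-- The linearized Ricci tensor
`δR_{αβ}[h] = −½∇^λ∇_λ h_{αβ} − ½∇_α∇_β(g^{λσ}h_{λσ}) + ∇^λ∇_{(α}h_{β)λ}`. -/
def linRicci (a : ℝ) (h : Pt → Matrix (Fin 4) (Fin 4) ℝ) (α β : Fin 4) (p : Pt) : ℝ :=
  -(1 / 2) * (∑ l : Fin 4, ∑ s : Fin 4, gInv a p l s * covD3 a (covD2 a h) l s α β p)
  - (1 / 2) * hess a (fun q => ∑ l : Fin 4, ∑ s : Fin 4, gInv a q l s * h q l s) α β p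
  + (1 / 2) * ((∑ l : Fin 4, ∑ s : Fin 4, gInv a p l s * covD3 a (covD2 a h) s α β l p)
      + (∑ l : Fin 4, ∑ s : Fin 4, gInv a p l s * covD3 a (covD2 a h) s β α l p))


/-! ### Helper lemmas -/

lemma aux_const {s : Set ℝ} (hs : IsOpen s) (hc : IsPreconnected s) {F : ℝ → ℂ}
    (h : ∀ x ∈ s, HasDerivAt F 0 x) {x y : ℝ} (hx : x ∈ s) (hy : y ∈ s) : F x = F y :=
  hs.is_const_of_deriv_eq_zero hc (fun x hx => (h x hx).differentiableAt.differentiableWithinAt)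
    (fun x hx => (h x hx).deriv) hx hy

lemma aux_id (x : ℝ) : HasDerivAt (fun y : ℝ => (y : ℂ)) 1 x :=
  (hasDerivAt_id x).ofReal_comp

lemma aux_w {z : ℝ} (hz : z ∈ Set.Ioo (-1 : ℝ) 1) : (1 - (z : ℂ) ^ 2) ≠ 0 := by
  have h : (1 - z ^ 2 : ℝ) ≠ 0 := by
    have := hz.1; have := hz.2; nlinarith
  exact_mod_cast h

lemma aux_dw (z : ℝ) : HasDerivAt (fun y : ℝ => 1 - (y : ℂ) ^ 2) (-(2 * (z : ℂ))) z := by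
  have := ((aux_id z).pow 2).const_sub 1
  refine HasDerivAt.congr_deriv this ?_; simp

/-- Solutions of `(1-z²) g'' + 2 z g' = 0`. -/
lemma aux_odeA (g g' g'' : ℝ → ℂ)
    (h1 : ∀ z ∈ Set.Ioo (-1 : ℝ) 1, HasDerivAt g (g' z) z)
    (h2 : ∀ z ∈ Set.Ioo (-1 : ℝ) 1, HasDerivAt g' (g'' z) z)
    (h : ∀ z ∈ Set.Ioo (-1 : ℝ) 1, (1 - (z : ℂ) ^ 2) * g'' z + 2 * z * g' z = 0) :
    ∃ A B : ℂ, ∀ z ∈ Set.Ioo (-1 : ℝ) 1, g z = A + B * (z * ((z : ℂ) ^ 2 - 3)) := by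
  have h0 : (0 : ℝ) ∈ Set.Ioo (-1 : ℝ) 1 := by simp
  have k1 : ∀ z ∈ Set.Ioo (-1 : ℝ) 1, g' z = g' 0 * (1 - (z : ℂ) ^ 2) := by
    intro z hz
    have := aux_const (F := fun z => g' z / (1 - (z : ℂ) ^ 2)) isOpen_Ioo isPreconnected_Ioo
      (fun x hx => by
        have := (h2 x hx).div (aux_dw x) (aux_w hx)
        refine HasDerivAt.congr_deriv this ?_
        have e := h x hx
        rw [div_eq_zero_iff]; left
        linear_combination e) hz h0
    have w := aux_w hz
    field_simp at this
    simpa [mul_comm] using this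
  refine ⟨g 0, -(g' 0) / 3, fun z hz => ?_⟩
  have := aux_const (F := fun z => g z + g' 0 / 3 * ((z : ℂ) * ((z : ℂ) ^ 2 - 3)))
    isOpen_Ioo isPreconnected_Ioo
      (fun x hx => by
        have := (h1 x hx).add
          (((aux_id x).mul (((aux_id x).pow 2).sub_const 3)).const_mul (g' 0 / 3))
        refine HasDerivAt.congr_deriv this ?_
        rw [k1 x hx]; simp; ring) hz h0
  simp at this
  linear_combination this

/-- Solutions of `(1-z²) g'' + 2 z g' = 2 g`. -/
lemma aux_odeB (g g' g'' : ℝ → ℂ)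
    (h1 : ∀ z ∈ Set.Ioo (-1 : ℝ) 1, HasDerivAt g (g' z) z)
    (h2 : ∀ z ∈ Set.Ioo (-1 : ℝ) 1, HasDerivAt g' (g'' z) z)
    (h : ∀ z ∈ Set.Ioo (-1 : ℝ) 1, (1 - (z : ℂ) ^ 2) * g'' z + 2 * z * g' z = 2 * g z) :
    ∃ A B : ℂ, ∀ z ∈ Set.Ioo (-1 : ℝ) 1, g z = A * (1 + (z : ℂ) ^ 2) + B * z := by
  have h0 : (0 : ℝ) ∈ Set.Ioo (-1 : ℝ) 1 := by simp
  refine ⟨g 0, g' 0, fun z hz => ?_⟩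
  have k1 := aux_const (F := fun z => (g' z * z - g z) / (1 - (z : ℂ) ^ 2))
      isOpen_Ioo isPreconnected_Ioo
      (fun x hx => by
        have := (((h2 x hx).mul (aux_id x)).sub (h1 x hx)).div (aux_dw x) (aux_w hx)
        refine HasDerivAt.congr_deriv this ?_
        have e := h x hx
        rw [div_eq_zero_iff]; left
        simp
        linear_combination x * e) hz h0
  have k2 := aux_const
      (F := fun z => (g' z * (1 + (z : ℂ) ^ 2) - 2 * (z * g z)) / (1 - (z : ℂ) ^ 2))
      isOpen_Ioo isPreconnected_Ioo
      (fun x hx => by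
        have := (((h2 x hx).mul (((aux_id x).pow 2).const_add 1)).sub
          (((aux_id x).mul (h1 x hx)).const_mul 2)).div (aux_dw x) (aux_w hx)
        refine HasDerivAt.congr_deriv this ?_
        have e := h x hx
        rw [div_eq_zero_iff]; left
        simp
        linear_combination (1 + (x : ℂ) ^ 2) * e) hz h0
  have w := aux_w hz
  field_simp at k1 k2
  simp at k1 k2
  apply mul_left_cancel₀ w
  linear_combination (-(1 + (z : ℂ) ^ 2)) * k1 + z * k2

lemma aux_cubic (ρ : ℝ) (c0 c1 c2 c3 : ℂ)
    (h : ∀ r : ℝ, ρ < r → c0 + c1 * r + c2 * (r : ℂ) ^ 2 + c3 * (r : ℂ) ^ 3 = 0) :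
    c0 = 0 ∧ c1 = 0 ∧ c2 = 0 ∧ c3 = 0 := by
  have e0 := h (ρ + 1) (by linarith)
  have e1 := h (ρ + 2) (by linarith)
  have e2 := h (ρ + 3) (by linarith)
  have e3 := h (ρ + 4) (by linarith)
  push_cast at e0 e1 e2 e3
  have k3 : c3 = 0 := by linear_combination (e3 - 3 * e2 + 3 * e1 - e0) / 6
  subst k3
  have k2 : c2 = 0 := by linear_combination (e2 - 2 * e1 + e0) / 2
  subst k2
  have k1 : c1 = 0 := by linear_combination e1 - e0
  subst k1
  exact ⟨by linear_combination e0, rfl, rfl, rfl⟩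

/-- If the derivative is a cubic-type polynomial, integrate. -/
lemma aux_poly (ρ : ℝ) (h : ℝ → ℂ) (hs : ContDiffOn ℝ (⊤ : ℕ∞) h (Set.Ioi ρ))
    (h4 : ∀ r ∈ Set.Ioi ρ, deriv^[4] h r = 0) (R : ℝ) (hR : ρ < R) :
    ∃ b0 b1 b2 b3 : ℂ, ∀ r ∈ Set.Ioi ρ, h r = b0 + b1 * ((r : ℂ) - R)
      + b2 * ((r : ℂ) - R) ^ 2 + b3 * ((r : ℂ) - R) ^ 3 := by
  have step : ∀ f : ℝ → ℂ, ContDiffOn ℝ (⊤ : ℕ∞) f (Set.Ioi ρ) →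
      ContDiffOn ℝ (⊤ : ℕ∞) (deriv f) (Set.Ioi ρ) := fun f hf =>
    hf.deriv_of_isOpen isOpen_Ioi (by simp)
  have hd : ∀ f : ℝ → ℂ, ContDiffOn ℝ (⊤ : ℕ∞) f (Set.Ioi ρ) → ∀ r ∈ Set.Ioi ρ,
      HasDerivAt f (deriv f r) r := fun f hf r hr =>
    ((hf.differentiableOn (by simp)).differentiableAt (isOpen_Ioi.mem_nhds hr)).hasDerivAt
  have s1 := step _ hs
  have s2 := step _ s1
  have s3 := step _ s2
  have hx : ∀ r : ℝ, HasDerivAt (fun y : ℝ => (y : ℂ) - R) 1 r := fun r =>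
    (aux_id r).sub_const _
  have integ : ∀ (f : ℝ → ℂ) (b0 b1 b2 : ℂ), ContDiffOn ℝ (⊤ : ℕ∞) f (Set.Ioi ρ) →
      (∀ r ∈ Set.Ioi ρ, deriv f r = b0 + b1 * ((r : ℂ) - R) + b2 * ((r : ℂ) - R) ^ 2) →
      ∀ r ∈ Set.Ioi ρ, f r = f R + b0 * ((r : ℂ) - R) + b1 / 2 * ((r : ℂ) - R) ^ 2
        + b2 / 3 * ((r : ℂ) - R) ^ 3 := by
    intro f b0 b1 b2 hf hb r hr
    have := aux_const (F := fun r => f r - (b0 * ((r : ℂ) - R) + b1 / 2 * ((r : ℂ) - R) ^ 2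
        + b2 / 3 * ((r : ℂ) - R) ^ 3)) isOpen_Ioi isPreconnected_Ioi
      (fun x hx' => by
        have := (hd f hf x hx').sub ((((hx x).const_mul b0).add
          (((hx x).pow 2).const_mul (b1 / 2))).add (((hx x).pow 3).const_mul (b2 / 3)))
        refine HasDerivAt.congr_deriv this ?_
        rw [hb x hx']; simp; ring) hr (Set.mem_Ioi.2 hR)
    simp at this
    linear_combination this
  have i3 := integ _ 0 0 0 s3 (fun r hr => by simpa using h4 r hr)
  have i2 := integ _ (deriv (deriv (deriv h)) R) 0 0 s2 (fun r hr => by simpa using i3 r hr)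
  have i1 := integ _ (deriv (deriv h) R) (deriv (deriv (deriv h)) R) 0 s1
    (fun r hr => by simpa using i2 r hr)
  have i0 := integ _ (deriv h R) (deriv (deriv h) R) (deriv (deriv (deriv h)) R / 2) hs
    (fun r hr => by rw [i1 r hr]; ring)
  exact ⟨_, _, _, _, i0⟩

lemma aux_struct (a : ℝ) (Φ : ℝ → ℝ → ℂ)
    (hsmooth : ContDiffOn ℝ (⊤ : ℕ∞) (fun q : ℝ × ℝ => Φ q.1 q.2) (U2 a))
    (hrad : ∀ q ∈ U2 a, deriv^[4] (fun r' => Φ r' q.2) q.1 = 0) :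
    ∃ f0 f1 f2 f3 : ℝ → ℂ, ContDiffOn ℝ (⊤ : ℕ∞) f0 (Set.Ioo (-1) 1) ∧
      ContDiffOn ℝ (⊤ : ℕ∞) f1 (Set.Ioo (-1) 1) ∧
      ContDiffOn ℝ (⊤ : ℕ∞) f2 (Set.Ioo (-1) 1) ∧
      ContDiffOn ℝ (⊤ : ℕ∞) f3 (Set.Ioo (-1) 1) ∧
      ∀ r ∈ Set.Ioi (rplus a), ∀ z ∈ Set.Ioo (-1 : ℝ) 1,
        Φ r z = (f0 z + f1 z * r + f2 z * (r : ℂ) ^ 2 + f3 z * (r : ℂ) ^ 3)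
          / (1 - (z : ℂ) ^ 2) := by
  set R := rplus a + 1 with hR
  have sz : ∀ r ∈ Set.Ioi (rplus a), ContDiffOn ℝ (⊤ : ℕ∞) (fun z => Φ r z) (Set.Ioo (-1) 1) := by
    intro r hr
    exact hsmooth.comp (f := fun z : ℝ => (r, z)) (by fun_prop) (fun z hz => ⟨hr, hz.1, hz.2⟩)
  have sr : ∀ z ∈ Set.Ioo (-1 : ℝ) 1, ContDiffOn ℝ (⊤ : ℕ∞) (fun r => Φ r z)
      (Set.Ioi (rplus a)) := by
    intro z hz
    exact hsmooth.comp (f := fun r : ℝ => (r, z)) (by fun_prop) (fun r hr => ⟨hr, hz.1, hz.2⟩)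
  have q0 := sz R (by simp [hR])
  have q1 := sz (R + 1) (Set.mem_Ioi.2 (by linarith))
  have q2 := sz (R + 2) (Set.mem_Ioi.2 (by linarith))
  have q3 := sz (R + 3) (Set.mem_Ioi.2 (by linarith))
  have hw : ContDiffOn ℝ (⊤ : ℕ∞) (fun z : ℝ => 1 - (z : ℂ) ^ 2) (Set.Ioo (-1) 1) := by
    have : ContDiff ℝ (⊤ : ℕ∞) (fun z : ℝ => (z : ℂ)) := Complex.ofRealCLM.contDiff
    exact (contDiff_const.sub (this.pow 2)).contDiffOn
  let b3 : ℝ → ℂ := fun z => (Φ (R + 3) z - 3 * Φ (R + 2) z + 3 * Φ (R + 1) z - Φ R z) / 6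
  let b2 : ℝ → ℂ := fun z => (Φ (R + 2) z - 2 * Φ (R + 1) z + Φ R z) / 2 - 3 * b3 z
  let b1 : ℝ → ℂ := fun z => Φ (R + 1) z - Φ R z - b2 z - b3 z
  have p3 : ContDiffOn ℝ (⊤ : ℕ∞) b3 (Set.Ioo (-1) 1) :=
    (((q3.sub (contDiffOn_const.mul q2)).add (contDiffOn_const.mul q1)).sub q0).div_const 6
  have p2 : ContDiffOn ℝ (⊤ : ℕ∞) b2 (Set.Ioo (-1) 1) :=
    (((q2.sub (contDiffOn_const.mul q1)).add q0).div_const 2).sub (contDiffOn_const.mul p3)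
  have p1 : ContDiffOn ℝ (⊤ : ℕ∞) b1 (Set.Ioo (-1) 1) := ((q1.sub q0).sub p2).sub p3
  refine ⟨fun z => (1 - (z : ℂ) ^ 2) * (Φ R z - R * b1 z + (R : ℂ) ^ 2 * b2 z
      - (R : ℂ) ^ 3 * b3 z),
    fun z => (1 - (z : ℂ) ^ 2) * (b1 z - 2 * R * b2 z + 3 * (R : ℂ) ^ 2 * b3 z),
    fun z => (1 - (z : ℂ) ^ 2) * (b2 z - 3 * R * b3 z),
    fun z => (1 - (z : ℂ) ^ 2) * b3 z, ?_, ?_, ?_, ?_, ?_⟩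
  · exact hw.mul (((q0.sub (contDiffOn_const.mul p1)).add (contDiffOn_const.mul p2)).sub
      (contDiffOn_const.mul p3))
  · exact hw.mul ((p1.sub (contDiffOn_const.mul p2)).add (contDiffOn_const.mul p3))
  · exact hw.mul (p2.sub (contDiffOn_const.mul p3))
  · exact hw.mul p3
  · intro r hr z hz
    obtain ⟨c0, c1, c2, c3, hc⟩ := aux_poly (rplus a) (fun r => Φ r z) (sr z hz)
      (fun r hr => hrad (r, z) ⟨hr, hz.1, hz.2⟩) R (by simp [hR])
    have e0 := hc R (by simp [hR])
    have e1 := hc (R + 1) (Set.mem_Ioi.2 (by linarith))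
    have e2 := hc (R + 2) (Set.mem_Ioi.2 (by linarith))
    have e3 := hc (R + 3) (Set.mem_Ioi.2 (by linarith))
    have e := hc r hr
    push_cast at e0 e1 e2 e3
    simp only [add_sub_cancel_left, sub_self] at e0 e1 e2 e3 e
    have k3 : b3 z = c3 := by simp only [b3]; rw [e0, e1, e2, e3]; ring
    have k2 : b2 z = c2 := by simp only [b2]; rw [k3, e0, e1, e2]; ring
    have k1 : b1 z = c1 := by simp only [b1]; rw [k3, k2, e0, e1]; ring
    have w := aux_w hz
    beta_reduce
    rw [k1, k2, k3, e, e0]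
    field_simp
    ring

/-- The Teukolsky equation in terms of the coefficient functions. -/
lemma aux_teuk (a : ℝ) (ha : |a| < 1) (Φ : ℝ → ℝ → ℂ) (f0 f1 f2 f3 : ℝ → ℂ)
    (s0 : ContDiffOn ℝ (⊤ : ℕ∞) f0 (Set.Ioo (-1) 1))
    (s1 : ContDiffOn ℝ (⊤ : ℕ∞) f1 (Set.Ioo (-1) 1))
    (s2 : ContDiffOn ℝ (⊤ : ℕ∞) f2 (Set.Ioo (-1) 1))
    (s3 : ContDiffOn ℝ (⊤ : ℕ∞) f3 (Set.Ioo (-1) 1))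
    (hf : ∀ r ∈ Set.Ioi (rplus a), ∀ z ∈ Set.Ioo (-1 : ℝ) 1,
        Φ r z = (f0 z + f1 z * r + f2 z * (r : ℂ) ^ 2 + f3 z * (r : ℂ) ^ 3)
          / (1 - (z : ℂ) ^ 2))
    (r : ℝ) (hr : r ∈ Set.Ioi (rplus a)) (z : ℝ) (hz : z ∈ Set.Ioo (-1 : ℝ) 1)
    (ht : TeukSAS a (-2) Φ r z = 0) :
    ((r : ℂ) * (r - 2) + (a : ℂ) ^ 2) * (2 * f2 z + 6 * f3 z * r)
      - 2 * ((r : ℂ) - 1) * (f1 z + 2 * f2 z * r + 3 * f3 z * (r : ℂ) ^ 2)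
      + (1 - (z : ℂ) ^ 2) * (deriv (deriv f0) z + deriv (deriv f1) z * r
        + deriv (deriv f2) z * (r : ℂ) ^ 2 + deriv (deriv f3) z * (r : ℂ) ^ 3)
      + 2 * z * (deriv f0 z + deriv f1 z * r
        + deriv f2 z * (r : ℂ) ^ 2 + deriv f3 z * (r : ℂ) ^ 3) = 0 := by
  have w := aux_w hz
  have hpos : ∀ r' ∈ Set.Ioi (rplus a), ((r' : ℂ) * (r' - 2) + (a : ℂ) ^ 2) ≠ 0 := by
    intro r' hr'
    have h1 : 0 ≤ 1 - a ^ 2 := by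
      have := (sq_lt_one_iff_abs_lt_one a).2 ha
      linarith
    have h2 := Real.sq_sqrt h1
    have h3 := Real.sqrt_nonneg (1 - a ^ 2)
    have h4 : 1 + Real.sqrt (1 - a ^ 2) < r' := hr'
    have : (r' * (r' - 2) + a ^ 2 : ℝ) ≠ 0 := by nlinarith
    exact_mod_cast this
  have hD := hpos r hr
  -- derivatives in r
  have dr1 : ∀ r' ∈ Set.Ioi (rplus a), deriv (fun r'' => Φ r'' z) r'
      = (f1 z + 2 * f2 z * r' + 3 * f3 z * (r' : ℂ) ^ 2) / (1 - (z : ℂ) ^ 2) := by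
    intro r' hr'
    have e : (fun r'' => Φ r'' z) =ᶠ[nhds r'] fun r'' : ℝ =>
        (f0 z + f1 z * r'' + f2 z * (r'' : ℂ) ^ 2 + f3 z * (r'' : ℂ) ^ 3) / (1 - (z : ℂ) ^ 2) := by
      filter_upwards [isOpen_Ioi.mem_nhds hr'] with x hx using hf x hx z hz
    rw [e.deriv_eq]
    have := (((((aux_id r').const_mul (f1 z)).const_add (f0 z)).add
      (((aux_id r').pow 2).const_mul (f2 z))).add
        (((aux_id r').pow 3).const_mul (f3 z))).div_const (1 - (z : ℂ) ^ 2)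
    refine (HasDerivAt.deriv (f' := _) (this)).trans ?_
    simp; ring
  have dr2 : deriv (fun r' => (Del a r' : ℂ) ^ ((-2 : ℤ) + 1) * deriv (fun r'' => Φ r'' z) r') r
      = ((2 * f2 z + 6 * f3 z * r) * ((r : ℂ) * (r - 2) + (a : ℂ) ^ 2)
        - (f1 z + 2 * f2 z * r + 3 * f3 z * (r : ℂ) ^ 2) * (2 * r - 2))
        / ((r : ℂ) * (r - 2) + (a : ℂ) ^ 2) ^ 2 / (1 - (z : ℂ) ^ 2) := by
    have e : (fun r' => (Del a r' : ℂ) ^ ((-2 : ℤ) + 1) * deriv (fun r'' => Φ r'' z) r')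
        =ᶠ[nhds r] fun r' : ℝ => (f1 z + 2 * f2 z * r' + 3 * f3 z * (r' : ℂ) ^ 2)
          / ((r' : ℂ) * (r' - 2) + (a : ℂ) ^ 2) / (1 - (z : ℂ) ^ 2) := by
      filter_upwards [isOpen_Ioi.mem_nhds hr] with x hx
      rw [dr1 x hx]
      have : ((-2 : ℤ) + 1) = -1 := by norm_num
      rw [this, zpow_neg_one]
      simp only [Del]
      push_cast
      have := hpos x hx
      field_simp
    rw [e.deriv_eq]
    have hn := (((aux_id r).const_mul (2 * f2 z)).const_add (f1 z)).add
      (((aux_id r).pow 2).const_mul (3 * f3 z))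
    have hd := ((aux_id r).mul ((aux_id r).sub_const 2)).add_const ((a : ℂ) ^ 2)
    have := (hn.div hd hD).div_const (1 - (z : ℂ) ^ 2)
    refine (HasDerivAt.deriv (f' := _) (this)).trans ?_
    simp; congr 2; ring
  -- derivatives in z
  have hd : ∀ f : ℝ → ℂ, ContDiffOn ℝ (⊤ : ℕ∞) f (Set.Ioo (-1) 1) → ∀ x ∈ Set.Ioo (-1 : ℝ) 1,
      HasDerivAt f (deriv f x) x := fun f hf x hx =>
    ((hf.differentiableOn (by simp)).differentiableAt (isOpen_Ioo.mem_nhds hx)).hasDerivAt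
  have step : ∀ f : ℝ → ℂ, ContDiffOn ℝ (⊤ : ℕ∞) f (Set.Ioo (-1) 1) →
      ContDiffOn ℝ (⊤ : ℕ∞) (deriv f) (Set.Ioo (-1) 1) := fun f hf =>
    hf.deriv_of_isOpen isOpen_Ioo (by simp)
  obtain ⟨F, hF⟩ : ∃ F : ℝ → ℂ, F = fun x => f0 x + f1 x * r + f2 x * (r : ℂ) ^ 2
    + f3 x * (r : ℂ) ^ 3 := ⟨_, rfl⟩
  obtain ⟨F', hF'⟩ : ∃ F' : ℝ → ℂ, F' = fun x => deriv f0 x + deriv f1 x * r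
    + deriv f2 x * (r : ℂ) ^ 2 + deriv f3 x * (r : ℂ) ^ 3 := ⟨_, rfl⟩
  obtain ⟨F'', hF''⟩ : ∃ F'' : ℂ, F'' = deriv (deriv f0) z + deriv (deriv f1) z * r
    + deriv (deriv f2) z * (r : ℂ) ^ 2 + deriv (deriv f3) z * (r : ℂ) ^ 3 := ⟨_, rfl⟩
  have d1 : ∀ x ∈ Set.Ioo (-1 : ℝ) 1, HasDerivAt F (F' x) x := by
    intro x hx
    rw [hF, hF']
    exact (((hd _ s0 x hx).add ((hd _ s1 x hx).mul_const _)).add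
      ((hd _ s2 x hx).mul_const _)).add ((hd _ s3 x hx).mul_const _)
  have d2 : HasDerivAt F' F'' z := by
    rw [hF', hF'']
    exact (((hd _ (step _ s0) z hz).add ((hd _ (step _ s1) z hz).mul_const _)).add
      ((hd _ (step _ s2) z hz).mul_const _)).add ((hd _ (step _ s3) z hz).mul_const _)
  have dz1 : ∀ x ∈ Set.Ioo (-1 : ℝ) 1, deriv (fun z'' => Φ r z'') x
      = (F' x * (1 - (x : ℂ) ^ 2) + 2 * x * F x) / (1 - (x : ℂ) ^ 2) ^ 2 := by
    intro x hx
    have e : (fun z'' => Φ r z'') =ᶠ[nhds x] fun y : ℝ => F y / (1 - (y : ℂ) ^ 2) := by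
      filter_upwards [isOpen_Ioo.mem_nhds hx] with y hy
      rw [hf r hr y hy, hF]
    rw [e.deriv_eq]
    refine (HasDerivAt.deriv (f' := _) ((d1 x hx).div (aux_dw x) (aux_w hx))).trans ?_
    congr 1; ring
  have dz2 : deriv (fun z' => ((1 - z' ^ 2 : ℝ) : ℂ) * deriv (fun z'' => Φ r z'') z') z
      = F'' + ((2 * F z + 2 * z * F' z) * (1 - (z : ℂ) ^ 2) + 2 * z * F z * (2 * z))
        / (1 - (z : ℂ) ^ 2) ^ 2 := by
    have e : (fun z' => ((1 - z' ^ 2 : ℝ) : ℂ) * deriv (fun z'' => Φ r z'') z')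
        =ᶠ[nhds z] fun y : ℝ => F' y + 2 * y * F y / (1 - (y : ℂ) ^ 2) := by
      filter_upwards [isOpen_Ioo.mem_nhds hz] with y hy
      rw [dz1 y hy]
      have := aux_w hy
      push_cast
      field_simp
    rw [e.deriv_eq]
    have := d2.add ((((aux_id z).const_mul 2).mul (d1 z hz)).div (aux_dw z) w)
    refine (HasDerivAt.deriv (f' := _) this).trans ?_
    congr 2
    simp
  have hΦ : Φ r z = F z / (1 - (z : ℂ) ^ 2) := by rw [hf r hr z hz, hF]
  unfold TeukSAS at ht
  rw [dr2, dz2, hΦ] at ht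
  have e2 : (-(-2 : ℤ)) = ((2 : ℕ) : ℤ) := by norm_num
  rw [e2, zpow_natCast] at ht
  rw [← hF'']
  have hF'z : F' z = deriv f0 z + deriv f1 z * r
    + deriv f2 z * (r : ℂ) ^ 2 + deriv f3 z * (r : ℂ) ^ 3 := by rw [hF']
  rw [← hF'z]
  simp only [Del] at ht
  push_cast at ht
  generalize F z = u at ht
  generalize F' z = u' at ht ⊢
  obtain ⟨D, hDD⟩ : ∃ D : ℂ, D = (r : ℂ) * (r - 2) + (a : ℂ) ^ 2 := ⟨_, rfl⟩
  rw [← hDD] at ht hD ⊢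
  field_simp at ht
  have ht' := ht
  apply mul_left_cancel₀ w
  linear_combination ht

/-- **Classification of the stationary axisymmetric kernel (`s = −2`).**  Every smooth joint
solution of `∂_r⁴ Φ = 0` and `𝒯₋₂ Φ = 0` on `U` is `Φ_Ker(c)` for a unique `c ∈ ℂ⁸`. -/
theorem SAS_kernel_classification_minus (a : ℝ) (ha : |a| < 1) (Φ : ℝ → ℝ → ℂ)
    (hsmooth : ContDiffOn ℝ (⊤ : ℕ∞) (fun q : ℝ × ℝ => Φ q.1 q.2) (U2 a))
    (hrad : ∀ q ∈ U2 a, deriv^[4] (fun r' => Φ r' q.2) q.1 = 0)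
    (hteuk : ∀ q ∈ U2 a, TeukSAS a (-2) Φ q.1 q.2 = 0) :
    ∃! c : Fin 8 → ℂ, ∀ q ∈ U2 a, Φ q.1 q.2 = PhiKer a c q.1 q.2 := by
  obtain ⟨f0, f1, f2, f3, s0, s1, s2, s3, hf⟩ := aux_struct a Φ hsmooth hrad
  have hd : ∀ f : ℝ → ℂ, ContDiffOn ℝ (⊤ : ℕ∞) f (Set.Ioo (-1) 1) → ∀ x ∈ Set.Ioo (-1 : ℝ) 1,
      HasDerivAt f (deriv f x) x := fun f hf x hx =>
    ((hf.differentiableOn (by simp)).differentiableAt (isOpen_Ioo.mem_nhds hx)).hasDerivAt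
  have hdd : ∀ f : ℝ → ℂ, ContDiffOn ℝ (⊤ : ℕ∞) f (Set.Ioo (-1) 1) → ∀ x ∈ Set.Ioo (-1 : ℝ) 1,
      HasDerivAt (deriv f) (deriv (deriv f) x) x := fun f hf x hx =>
    hd _ (hf.deriv_of_isOpen isOpen_Ioo (by simp)) x hx
  -- coefficients of the equation in powers of `r`
  have key : ∀ z ∈ Set.Ioo (-1 : ℝ) 1, _ := fun z hz => aux_cubic (rplus a)
    ((1 - (z : ℂ) ^ 2) * deriv (deriv f0) z + 2 * z * deriv f0 z + 2 * (a : ℂ) ^ 2 * f2 z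
      + 2 * f1 z)
    ((1 - (z : ℂ) ^ 2) * deriv (deriv f1) z + 2 * z * deriv f1 z + 6 * (a : ℂ) ^ 2 * f3 z
      - 2 * f1 z)
    ((1 - (z : ℂ) ^ 2) * deriv (deriv f2) z + 2 * z * deriv f2 z - 6 * f3 z - 2 * f2 z)
    ((1 - (z : ℂ) ^ 2) * deriv (deriv f3) z + 2 * z * deriv f3 z)
    (fun r hr => by
      have := aux_teuk a ha Φ f0 f1 f2 f3 s0 s1 s2 s3 hf r hr z hz
        (hteuk (r, z) ⟨hr, hz.1, hz.2⟩)
      linear_combination this)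
  have hX := aux_id
  obtain ⟨c5, c7, h3⟩ := aux_odeA f3 (deriv f3) (deriv (deriv f3)) (hd _ s3) (hdd _ s3)
    (fun z hz => (key z hz).2.2.2)
  -- derivatives of the polynomial corrections
  have cub : ∀ A B C D : ℂ, ∀ x : ℝ, HasDerivAt
      (fun y : ℝ => A + B * (y : ℂ) + C * (y : ℂ) ^ 2 + D * (y : ℂ) ^ 3)
      (B + 2 * C * x + 3 * D * (x : ℂ) ^ 2 + 0 * (x : ℂ) ^ 3) x := by
    intro A B C D x
    have := ((((aux_id x).const_mul B).const_add A).add (((aux_id x).pow 2).const_mul C)).add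
      (((aux_id x).pow 3).const_mul D)
    refine HasDerivAt.congr_deriv this ?_
    simp; ring
  obtain ⟨c6, c4, h2⟩ := aux_odeB _ _ _
    (fun z hz => (hd _ s2 z hz).sub (cub (-3 * c5) (-12 * c7) 0 (-3 * c7) z))
    (fun z hz => (hdd _ s2 z hz).sub (cub (-12 * c7) (2 * 0) (3 * (-3 * c7)) 0 z))
    (fun z hz => by
      have e := (key z hz).2.2.1
      rw [h3 z hz] at e
      simp only [Pi.sub_apply]
      linear_combination e)
  obtain ⟨c3, c1, h1⟩ := aux_odeB _ _ _
    (fun z hz => (hd _ s1 z hz).sub (cub (3 * (a : ℂ) ^ 2 * c5) (12 * (a : ℂ) ^ 2 * c7) 0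
      (3 * (a : ℂ) ^ 2 * c7) z))
    (fun z hz => (hdd _ s1 z hz).sub (cub (12 * (a : ℂ) ^ 2 * c7) (2 * 0)
      (3 * (3 * (a : ℂ) ^ 2 * c7)) 0 z))
    (fun z hz => by
      have e := (key z hz).2.1
      rw [h3 z hz] at e
      simp only [Pi.sub_apply]
      linear_combination e)
  obtain ⟨c0, c2, h0⟩ := aux_odeA _ _ _
    (fun z hz => (hd _ s0 z hz).sub (cub 0 (-c1 - (a : ℂ) ^ 2 * c4) (-c3 - (a : ℂ) ^ 2 * c6) 0 z))
    (fun z hz => (hdd _ s0 z hz).sub (cub (-c1 - (a : ℂ) ^ 2 * c4)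
      (2 * (-c3 - (a : ℂ) ^ 2 * c6)) (3 * 0) 0 z))
    (fun z hz => by
      have e := (key z hz).1
      have e1 := h1 z hz
      have e2 := h2 z hz
      simp only [Pi.sub_apply] at e1 e2 ⊢
      linear_combination e - 2 * (a : ℂ) ^ 2 * e2 - 2 * e1)
  have hsol : ∀ q ∈ U2 a, Φ q.1 q.2 = PhiKer a ![c0, c1, c2, c3, c4, c5, c6, c7] q.1 q.2 := by
    rintro ⟨r, z⟩ ⟨hr, hz⟩
    have hz' : z ∈ Set.Ioo (-1 : ℝ) 1 := hz
    have e0 := h0 z hz'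
    have e1 := h1 z hz'
    have e2 := h2 z hz'
    have e3 := h3 z hz'
    simp only [Pi.sub_apply] at e0 e1 e2
    show Φ r z = _
    rw [hf r hr z hz', div_eq_inv_mul]
    unfold PhiKer
    congr 1
    simp
    linear_combination e0 + r * e1 + (r : ℂ) ^ 2 * e2 + (r : ℂ) ^ 3 * e3
  refine ⟨_, hsol, ?_⟩
  generalize ![c0, c1, c2, c3, c4, c5, c6, c7] = c at hsol
  intro d hdsol
  have k : ∀ z ∈ Set.Ioo (-1 : ℝ) 1, _ := fun z hz => aux_cubic (rplus a)
    ((d 0 - c 0) + (d 2 - c 2) * (z * ((z : ℂ) ^ 2 - 3)) - (d 1 - c 1) * z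
      - (d 3 - c 3) * (z : ℂ) ^ 2 - (a : ℂ) ^ 2 * (d 4 - c 4) * z
      - (a : ℂ) ^ 2 * (d 6 - c 6) * (z : ℂ) ^ 2)
    ((d 1 - c 1) * z + (d 3 - c 3) * (1 + (z : ℂ) ^ 2) + 3 * (a : ℂ) ^ 2 * (d 5 - c 5)
      + (d 7 - c 7) * (3 * (a : ℂ) ^ 2 * (z : ℂ) ^ 3 + 12 * (a : ℂ) ^ 2 * z))
    ((d 4 - c 4) * z + (d 6 - c 6) * (1 + (z : ℂ) ^ 2) - 3 * (d 5 - c 5)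
      + (d 7 - c 7) * (-3 * (z : ℂ) ^ 3 - 12 * z))
    ((d 5 - c 5) + (d 7 - c 7) * ((z : ℂ) ^ 3 - 3 * z))
    (fun r hr => by
      have e := (hdsol (r, z) ⟨hr, hz.1, hz.2⟩).symm.trans (hsol (r, z) ⟨hr, hz.1, hz.2⟩)
      unfold PhiKer at e
      have e' := mul_left_cancel₀ (inv_ne_zero (aux_w hz)) e
      simp only at e'
      linear_combination e')
  obtain ⟨p0, p1, p2, p3⟩ := k 0 (by simp)
  obtain ⟨m0, m1, m2, m3⟩ := k (1 / 2) (by constructor <;> norm_num)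
  push_cast at p0 p1 p2 p3 m0 m1 m2 m3
  have u5 : d 5 = c 5 := by linear_combination p3
  have u7 : d 7 = c 7 := by
    rw [u5] at m3
    linear_combination (-8 / 11) * m3
  rw [u5, u7] at p1 p2 m1 m2
  have u6 : d 6 = c 6 := by linear_combination p2
  have u3 : d 3 = c 3 := by linear_combination p1
  rw [u6] at m2
  rw [u3] at m1
  have u4 : d 4 = c 4 := by linear_combination 2 * m2
  have u1 : d 1 = c 1 := by linear_combination 2 * m1
  rw [u1, u3, u4, u6] at p0 m0
  have u0 : d 0 = c 0 := by linear_combination p0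
  rw [u0] at m0
  have u2 : d 2 = c 2 := by linear_combination (-8 / 11) * m0
  funext i
  fin_cases i
  exacts [u0, u1, u2, u3, u4, u5, u6, u7]

end Kerr
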